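/- For every n ≥ 0 and every word β over {0,1} of length 2^n: if β 0^{(n)} 0^{(n)} is a factor of ω then β = 1^{(n)}; if 0^{(n)} 0^{(n)} β is a factor of ω then β = 1^{(n)}; if β 1^{(n)} 1^{(n)} is a factor of ω then β = 0^{(n)}; and if 1^{(n)} 1^{(n)} β is a factor of ω then β = 0^{(n)}. -/

import Mathlib

/-- One-sided Thue–Morse sequence: parity of the binary digit sum. -/
def tm (n : ℕ) : ℕ := (Nat.digits 2 n).sum % 2

/-- Two-sided Thue–Morse sequence `ω : ℤ → {0,1}`. -/
def tmZ (n : ℤ) : ℕ := if 0 ≤ n then tm n.toNat else tm (-n - 1).toNat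

/-- The block `ω_[m, m+k-1]` of the two-sided Thue–Morse sequence. -/
def tmBlock (m : ℤ) (k : ℕ) : List ℕ := (List.range k).map fun j => tmZ (m + j)

/-- A (nonempty) word is a factor of the two-sided Thue–Morse sequence. -/
def IsFactor (α : List ℕ) : Prop := α ≠ [] ∧ ∃ m : ℤ, α = tmBlock m α.length

/-- The words `i⁽ⁿ⁾`: `blk i 0 = [i]`, `blk i (n+1) = blk i n ++ blk (1-i) n`. -/
def blk : ℕ → ℕ → List ℕ
  | i, 0 => [i]
  | i, n + 1 => blk i n ++ blk (1 - i) n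

theorem tm_le (n : ℕ) : tm n ≤ 1 := by unfold tm; omega

theorem tm_even (n : ℕ) : tm (2 * n) = tm n := by
  unfold tm
  rcases Nat.eq_zero_or_pos n with h | h
  · subst h; rfl
  · have := Nat.digits_add_two_add_one 0 (2 * n - 1)
    have e : 2 * n - 1 + 1 = 2 * n := by omega
    rw [e] at this
    simp at this
    simp [this]

theorem tm_odd (n : ℕ) : tm (2 * n + 1) = 1 - tm n := by
  unfold tm
  have := Nat.digits_add_two_add_one 0 (2 * n)
  have e : (2 * n + 1) / 2 = n := by omega
  have e2 : (2 * n + 1) % 2 = 1 := by omega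
  simp only [Nat.zero_add, e, e2] at this
  rw [this, List.sum_cons]
  omega

/-- the companion sequence -/
def tmW (n : ℤ) : ℕ := if 0 ≤ n then tm n.toNat else 1 - tm (-n - 1).toNat

def IsSubst (x y : ℤ → ℕ) : Prop := ∀ k, y k ≤ 1 ∧ x (2 * k) = y k ∧ x (2 * k + 1) = 1 - y k

theorem sub_ZW : IsSubst tmZ tmW := by
  intro k
  unfold tmZ tmW
  by_cases h : 0 ≤ k
  · obtain ⟨n, rfl⟩ := Int.eq_ofNat_of_zero_le h
    have a : (2 * (n : ℤ)).toNat = 2 * n := by omega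
    have b : (2 * (n : ℤ) + 1).toNat = 2 * n + 1 := by omega
    rw [if_pos h, if_pos (by omega), if_pos (by omega), a, b, tm_even, tm_odd]
    exact ⟨tm_le _, rfl, rfl⟩
  · obtain ⟨n, hn⟩ := Int.eq_ofNat_of_zero_le (show 0 ≤ -k - 1 by omega)
    have a : (-(2 * k) - 1).toNat = 2 * n + 1 := by omega
    have b : (-(2 * k + 1) - 1).toNat = 2 * n := by omega
    have c : (-k - 1).toNat = n := by omega
    rw [if_neg h, if_neg (by omega), if_neg (by omega), a, b, c, tm_even, tm_odd]
    have := tm_le n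
    omega

theorem sub_WZ : IsSubst tmW tmZ := by
  intro k
  unfold tmZ tmW
  by_cases h : 0 ≤ k
  · obtain ⟨n, rfl⟩ := Int.eq_ofNat_of_zero_le h
    have a : (2 * (n : ℤ)).toNat = 2 * n := by omega
    have b : (2 * (n : ℤ) + 1).toNat = 2 * n + 1 := by omega
    rw [if_pos h, if_pos (by omega), if_pos (by omega), a, b, tm_even, tm_odd]
    exact ⟨tm_le _, rfl, rfl⟩
  · obtain ⟨n, hn⟩ := Int.eq_ofNat_of_zero_le (show 0 ≤ -k - 1 by omega)
    have a : (-(2 * k) - 1).toNat = 2 * n + 1 := by omega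
    have b : (-(2 * k + 1) - 1).toNat = 2 * n := by omega
    have c : (-k - 1).toNat = n := by omega
    rw [if_neg h, if_neg (by omega), if_neg (by omega), a, b, c, tm_even, tm_odd]
    have := tm_le n
    omega

def Good (x : ℤ → ℕ) : Prop := x = tmZ ∨ x = tmW

theorem Good.desub {x : ℤ → ℕ} (h : Good x) : ∃ y, Good y ∧ IsSubst x y := by
  rcases h with rfl | rfl
  · exact ⟨_, Or.inr rfl, sub_ZW⟩
  · exact ⟨_, Or.inl rfl, sub_WZ⟩

theorem Good.cube_free {x : ℤ → ℕ} (h : Good x) (k : ℤ) :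
    ¬ (x k = x (k + 1) ∧ x (k + 1) = x (k + 2)) := by
  obtain ⟨y, -, hs⟩ := h.desub
  rcases Int.even_or_odd' k with ⟨j, rfl | rfl⟩
  · have := hs j
    omega
  · have := hs (j + 1)
    have e1 : 2 * j + 1 + 1 = 2 * (j + 1) := by ring
    have e2 : 2 * j + 1 + 2 = 2 * (j + 1) + 1 := by ring
    rw [e1, e2]
    omega

def Occ (x : ℤ → ℕ) : ℕ → ℤ → ℕ → Prop
  | 0, m, i => x m = i
  | n + 1, m, i => Occ x n m i ∧ Occ x n (m + 2 ^ n) (1 - i)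

theorem occ_sub {x y : ℤ → ℕ} (hs : IsSubst x y) (n : ℕ) : ∀ (m : ℤ) (i : ℕ), 
    Occ x (n + 1) (2 * m) i ↔ Occ y n m i := by
  induction n with
  | zero =>
    intro m i
    have := hs m
    simp only [Occ, pow_zero]
    omega
  | succ n ih =>
    intro m i
    rw [show Occ x (n + 1 + 1) (2 * m) i ↔ Occ x (n + 1) (2 * m) i ∧
      Occ x (n + 1) (2 * m + 2 ^ (n + 1)) (1 - i) from Iff.rfl, ih,
      show Occ y (n + 1) m i ↔ Occ y n m i ∧ Occ y n (m + 2 ^ n) (1 - i) from Iff.rfl,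
      ← ih (m + 2 ^ n)]
    have e : 2 * m + 2 ^ (n + 1) = 2 * (m + 2 ^ n) := by ring
    rw [e]

theorem occ_first {x : ℤ → ℕ} (n : ℕ) (m : ℤ) (i : ℕ) (h : Occ x (n + 1) m i) :
    x m = i ∧ x (m + 1) = 1 - i := by
  induction n with
  | zero => simpa [Occ] using h
  | succ n ih => exact ih h.1

theorem occ_second {x : ℤ → ℕ} (n : ℕ) (m : ℤ) (i : ℕ) (h : Occ x (n + 2) m i) :
    x (m + 2) = 1 - i ∧ x (m + 3) = 1 - (1 - i) := by
  induction n with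
  | zero =>
    have := h.2
    simp [Occ] at this
    rwa [add_assoc] at this
  | succ n ih => exact ih h.1

theorem main_occ (n : ℕ) : ∀ (x : ℤ → ℕ) (_ : Good x) (m : ℤ) (i : ℕ) (_ : i ≤ 1)
    (_ : Occ x n m i) (_ : Occ x n (m + 2 ^ n) i),
    Occ x n (m - 2 ^ n) (1 - i) ∧ Occ x n (m + 2 * 2 ^ n) (1 - i) := by
  induction n with
  | zero =>
    intro x hx m i hi h1 h2
    have c1 := hx.cube_free m
    have c2 := hx.cube_free (m - 1)
    obtain ⟨y, hy, hs⟩ := hx.desub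
    have le : ∀ k, x k ≤ 1 := by
      intro k
      rcases Int.even_or_odd' k with ⟨j, rfl | rfl⟩ <;> have := hs j <;> omega
    have l1 := le (m - 1)
    have l2 := le (m + 2)
    have e1 : m - 1 + 1 = m := by ring
    have e2 : m - 1 + 2 = m + 1 := by ring
    rw [e1, e2] at c2
    simp only [Occ, pow_zero, mul_one] at *
    omega
  | succ n ih =>
    intro x hx m i hi h1 h2
    obtain ⟨y, hy, hs⟩ := hx.desub
    rcases Int.even_or_odd' m with ⟨k, rfl | rfl⟩
    · have e1 : 2 * k + 2 ^ (n + 1) = 2 * (k + 2 ^ n) := by ring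
      have e2 : 2 * k - 2 ^ (n + 1) = 2 * (k - 2 ^ n) := by ring
      have e3 : 2 * k + 2 * 2 ^ (n + 1) = 2 * (k + 2 * 2 ^ n) := by ring
      rw [e1] at h2
      rw [e2, e3, occ_sub hs, occ_sub hs]
      rw [occ_sub hs] at h1 h2
      exact ih y hy k i hi h1 h2
    · exfalso
      have a := occ_first _ _ _ h1
      have b : x (2 * k + 1 + 2) ≠ x (2 * k + 1 + 3) := by
        cases n with
        | zero =>
          have := occ_first _ _ _ h2
          norm_num [add_assoc] at this ⊢
          omega
        | succ n =>
          have := occ_second _ _ _ h1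
          omega
      have c := hy.cube_free k
      have s0 := hs k
      have s1 := hs (k + 1)
      have s2 := hs (k + 2)
      have e1 : 2 * k + 1 + 1 = 2 * (k + 1) := by ring
      have e2 : 2 * k + 1 + 2 = 2 * (k + 1) + 1 := by ring
      have e3 : 2 * k + 1 + 3 = 2 * (k + 2) := by ring
      rw [e1] at a
      rw [e2, e3] at b
      omega

theorem tmBlock_length (m : ℤ) (k : ℕ) : (tmBlock m k).length = k := by simp [tmBlock]

theorem tmBlock_eq (m : ℤ) (k : ℕ) :
    tmBlock m k = (List.range k).map (fun j : ℕ => tmZ (m + (j : ℤ))) := by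
  simp [tmBlock, List.map_flatMap, Function.comp_def, ← List.map_eq_flatMap]

theorem tmBlock_add (m : ℤ) (a b : ℕ) :
    tmBlock m (a + b) = tmBlock m a ++ tmBlock (m + a) b := by
  simp only [tmBlock_eq, List.range_add, List.map_append, List.map_map]
  congr 1
  apply List.map_congr_left
  intro j _
  simp [add_assoc]

theorem blk_length (n : ℕ) : ∀ i, (blk i n).length = 2 ^ n := by
  induction n with
  | zero => intro i; rfl
  | succ n ih => intro i; rw [blk, List.length_append, ih, ih]; ring

theorem occ_iff (n : ℕ) : ∀ (m : ℤ) (i : ℕ), tmBlock m (2 ^ n) = blk i n ↔ Occ tmZ n m i := by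
  induction n with
  | zero => intro m i; simp [tmBlock, blk, Occ]
  | succ n ih =>
    intro m i
    rw [Occ, blk, ← ih, ← ih, pow_succ, mul_two, tmBlock_add,
      List.append_eq_append_iff_of_size_eq_left (by rw [tmBlock_length, blk_length])]
    push_cast
    rfl

theorem factor_split (n : ℕ) (a b c : List ℕ) (ha : a.length = 2 ^ n) (hb : b.length = 2 ^ n)
    (hc : c.length = 2 ^ n) (h : IsFactor (a ++ b ++ c)) :
    ∃ m : ℤ, a = tmBlock (m - 2 ^ n) (2 ^ n) ∧ b = tmBlock m (2 ^ n) ∧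
      c = tmBlock (m + 2 ^ n) (2 ^ n) := by
  obtain ⟨-, m, hm⟩ := h
  rw [List.length_append, List.length_append, ha, hb, hc, tmBlock_add, tmBlock_add] at hm
  obtain ⟨h1, h2⟩ := List.append_inj hm (by simp [tmBlock_length, ha, hb])
  obtain ⟨h3, h4⟩ := List.append_inj h1 (by simp [tmBlock_length, ha])
  refine ⟨m + 2 ^ n, ?_, ?_, ?_⟩
  · rw [add_sub_cancel_right]; exact h3
  · rw [h4]; push_cast; rfl
  · rw [h2]; push_cast; rw [add_assoc]

theorem left_case (n i : ℕ) (hi : i ≤ 1) (β : List ℕ) (hβ : β.length = 2 ^ n)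
    (h : IsFactor (β ++ blk i n ++ blk i n)) : β = blk (1 - i) n := by
  obtain ⟨m, h1, h2, h3⟩ := factor_split n _ _ _ hβ (blk_length n i) (blk_length n i) h
  rw [h1, occ_iff]
  exact (main_occ n tmZ (Or.inl rfl) m i hi ((occ_iff _ _ _).1 h2.symm)
    ((occ_iff _ _ _).1 h3.symm)).1

theorem right_case (n i : ℕ) (hi : i ≤ 1) (β : List ℕ) (hβ : β.length = 2 ^ n)
    (h : IsFactor (blk i n ++ blk i n ++ β)) : β = blk (1 - i) n := by
  obtain ⟨m, h1, h2, h3⟩ := factor_split n _ _ _ (blk_length n i) (blk_length n i) hβ h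
  rw [h3, occ_iff]
  have := (main_occ n tmZ (Or.inl rfl) (m - 2 ^ n) i hi ((occ_iff _ _ _).1 h1.symm)
    (by rw [sub_add_cancel]; exact (occ_iff _ _ _).1 h2.symm)).2
  have e : m - 2 ^ n + 2 * 2 ^ n = m + 2 ^ n := by ring
  rwa [e] at this

/-- Neighbours of the squares `0⁽ⁿ⁾0⁽ⁿ⁾` and `1⁽ⁿ⁾1⁽ⁿ⁾` in the two-sided Thue–Morse
sequence are uniquely determined. -/
theorem square_neighbours (n : ℕ) (β : List ℕ) (hβ : β.length = 2 ^ n) :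
    (IsFactor (β ++ blk 0 n ++ blk 0 n) → β = blk 1 n) ∧
    (IsFactor (blk 0 n ++ blk 0 n ++ β) → β = blk 1 n) ∧
    (IsFactor (β ++ blk 1 n ++ blk 1 n) → β = blk 0 n) ∧
    (IsFactor (blk 1 n ++ blk 1 n ++ β) → β = blk 0 n) :=
  ⟨left_case n 0 (by norm_num) β hβ, right_case n 0 (by norm_num) β hβ,
    left_case n 1 le_rfl β hβ, right_case n 1 le_rfl β hβ⟩
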